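/- arXiv:2211.07206 — 4 statements merged into one kernel-verified Lean document; each statement's English description precedes it below -/
import Mathlib

section
/- Improvement of the PACOH meta-learning bound over the per-task learning bound: Set λ = √n and β = √m, write Z(S,P) = Z_{√m}(S,P), and let Zᴵᴵ = E_{P∼P}[ exp( (1/(√(nm)+1))·∑_{i=1}^n log Z(S_i,P) ) ], assumed finite and positive, with all expectations E_{P∼P}[log Z(S_i,P)] finite. Define the per-task bound value B_pt = −(1/(n√m))·∑_{i=1}^n E_{P∼P}[log Z(S_i,P)] + C and the PACOH bound value B_meta = −(1/√n + 1/(n√m))·log Zᴵᴵ + C, where C is the common constant term of the two bounds. Then the improvement Δ := B_pt − B_meta satisfies Δ = (1/√n + 1/(n√m))·log E_{P∼P}[ exp( (1/(√(nm)+1))·∑_{i=1}^n ( log Z(S_i,P) − E_{P′∼P}[log Z(S_i,P′)] ) ) ], and Δ ≥ 0. -/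
open MeasureTheory Real
open scoped ENNReal Classical

noncomputable section

/-- The Kullback–Leibler divergence `D_KL(ρ‖ν)`: equal to `E_{x∼ρ}[log (dρ/dν)(x)]` when
`ρ ≪ ν` (and this expectation is defined), and `+∞` otherwise. -/
def KLdiv {α : Type*} [MeasurableSpace α] (ρ ν : Measure α) : ℝ≥0∞ :=
  if ρ ≪ ν ∧ Integrable (llr ρ ν) ρ then ENNReal.ofReal (∫ x, llr ρ ν x ∂ρ) else ∞

variable {Z H : Type*} [MeasurableSpace Z] [MeasurableSpace H]

/-- Expected error `L(h, D) = E_{z∼D}[l(h,z)]`. -/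
def expErr (l : H → Z → ℝ) (D : Measure Z) (h : H) : ℝ := ∫ z, l h z ∂D

/-- Empirical error `L̂(h, S) = (1/m) ∑_j l(h, z_j)` on a dataset `S ∈ Z^m`. -/
def empErr (l : H → Z → ℝ) {m : ℕ} (S : Fin m → Z) (h : H) : ℝ :=
  (∑ j, l h (S j)) / m

/-- Gibbs expected error `L(Q, D) = E_{h∼Q}[L(h, D)]` of a randomized predictor `Q`. -/
def gibbsExpErr (l : H → Z → ℝ) (Q : Measure H) (D : Measure Z) : ℝ :=
  ∫ h, expErr l D h ∂Q

/-- Gibbs empirical error `L̂(Q, S) = E_{h∼Q}[L̂(h, S)]` of a randomized predictor `Q`. -/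
def gibbsEmpErr (l : H → Z → ℝ) {m : ℕ} (Q : Measure H) (S : Fin m → Z) : ℝ :=
  ∫ h, empErr l S h ∂Q

/-- The distribution `D^m` of `m` i.i.d. samples from `D`. -/
def iidSamples (m : ℕ) (D : Measure Z) : Measure (Fin m → Z) := Measure.pi fun _ => D

/-- The hierarchical task distribution `T_h` on pairs `(D, S)`: draw `D ∼ T`, then
`S ∼ D^m`. -/
def taskDistr (m : ℕ) (T : Measure (Measure Z)) : Measure (Measure Z × (Fin m → Z)) :=
  T.bind fun D => (iidSamples m D).map fun S => (D, S)

/-- `E_{(D,S)∼T_h}[L(Q(S,P), D)]`: the expected generalization error on tasks from the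
environment `T` of the base learner `QL` instantiated with the prior `P`. -/
def priorTransferErr (l : H → Z → ℝ) (m : ℕ) (T : Measure (Measure Z))
    (QL : (Fin m → Z) → Measure H → Measure H) (P : Measure H) : ℝ :=
  ∫ D, ∫ S, gibbsExpErr l (QL S P) D ∂(iidSamples m D) ∂T

/-- The transfer error `L(Q, T) = E_{P∼Q} E_{(D,S)∼T_h}[L(Q(S,P), D)]` of a
hyper-posterior `Q`. -/
def transferErr (l : H → Z → ℝ) (m : ℕ) (T : Measure (Measure Z))
    (QL : (Fin m → Z) → Measure H → Measure H) (Q : Measure (Measure H)) : ℝ :=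
  ∫ P, priorTransferErr l m T QL P ∂Q

/-- The empirical multi-task error
`L̂(Q, S_1, …, S_n) = E_{P∼Q}[(1/n) ∑_i L̂(Q(S_i,P), S_i)]`. -/
def empMultiErr (l : H → Z → ℝ) {m : ℕ}
    (QL : (Fin m → Z) → Measure H → Measure H) (Q : Measure (Measure H))
    {n : ℕ} (S : Fin n → Fin m → Z) : ℝ :=
  ∫ P, (1 / n : ℝ) * ∑ i, gibbsEmpErr l (QL (S i) P) (S i) ∂Q

/-- The environment-level cumulant generating function term `Ψ^{II}(λ)`. -/
def PsiII (l : H → Z → ℝ) (m n : ℕ) (T : Measure (Measure Z))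
    (QL : (Fin m → Z) → Measure H → Measure H) (Pr : Measure (Measure H)) (lam : ℝ) : ℝ :=
  ((n : ℝ) / lam) * Real.log (∫ P, ∫ D, ∫ S,
      Real.exp ((lam / n) * (priorTransferErr l m T QL P - gibbsExpErr l (QL S P) D))
    ∂(iidSamples m D) ∂T ∂Pr)

end

noncomputable section
variable {Z H : Type*} [MeasurableSpace Z] [MeasurableSpace H]

/-- The generalized marginal likelihood (partition function)
`Z_β(S, P) = E_{h∼P}[exp (-β L̂(h,S))]`. -/
def Zpart (l : H → Z → ℝ) (β : ℝ) {m : ℕ} (S : Fin m → Z) (P : Measure H) : ℝ :=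
  ∫ h, Real.exp (-β * empErr l S h) ∂P

/-- The Gibbs posterior base learner: `Q*(S, P)` has density `exp (-β L̂(·,S)) / Z_β(S,P)`
with respect to the prior `P`. -/
def gibbsPosterior (l : H → Z → ℝ) (β : ℝ) {m : ℕ}
    (S : Fin m → Z) (P : Measure H) : Measure H :=
  P.withDensity fun h => ENNReal.ofReal (Real.exp (-β * empErr l S h) / Zpart l β S P)

end

/-!
By Jensen's inequality the log-partition function `t ↦ log E[exp (t X)]` dominates `t ↦ t E[X]`,
and the gap between the two is the log-partition function of the centered variable `X - E[X]`.
Take `X = ∑ i, log Z(S_i, ·)`, sampled from the hyper-prior, and `t = λ / (nβ + λ)`. Multiplying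
by `t` turns the prefactor `1/λ + 1/(nβ)` of the PACOH bound into the prefactor `1/(nβ)` of the
per-task bound, so the improvement is `1/λ + 1/(nβ)` times the Jensen gap.
-/

noncomputable section

open ProbabilityTheory

section CumulantGeneratingFunction

variable {Ω : Type*} [MeasurableSpace Ω] {μ : Measure Ω} {X : Ω → ℝ} {t : ℝ}

theorem cgf_sub_const [NeZero μ] (hexp : Integrable (fun ω => exp (t * X ω)) μ) (a : ℝ) :
    cgf (fun ω => X ω - a) μ t = cgf X μ t - t * a := by
  simp only [cgf, sub_eq_add_neg, mgf_add_const]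
  rw [log_mul (mgf_pos_iff.2 hexp).ne' (exp_ne_zero _), log_exp, mul_neg]

theorem mul_integral_le_cgf [IsProbabilityMeasure μ] (hX : Integrable X μ)
    (hexp : Integrable (fun ω => exp (t * X ω)) μ) :
    t * ∫ ω, X ω ∂μ ≤ cgf X μ t := by
  rw [cgf, le_log_iff_exp_le (mgf_pos hexp), ← integral_const_mul]
  exact convexOn_exp.map_integral_le continuous_exp.continuousOn isClosed_univ
    (.of_forall fun _ => Set.mem_univ _) (hX.const_mul t) hexp

end CumulantGeneratingFunction

theorem one_div_add_one_div_mul_div_add {K : Type*} [Field K] {a b : K} (ha : a ≠ 0) (hb : b ≠ 0)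
    (hba : b + a ≠ 0) : (1 / a + 1 / b) * (a / (b + a)) = 1 / b := by
  field_simp

theorem sqrt_div_mul_sqrt_add_sqrt {x : ℝ} (hx : 0 < x) (y : ℝ) :
    √x / (x * √y + √x) = 1 / (√(x * y) + 1) := by
  have hfactor : x * √y + √x = √x * (√(x * y) + 1) := by
    rw [sqrt_mul hx.le, mul_add, mul_one, ← mul_assoc, mul_self_sqrt hx.le]
  rw [hfactor, div_mul_cancel_left₀ (sqrt_pos.2 hx).ne', one_div]

section Bounds

variable {ι Ω : Type*} [Fintype ι] [MeasurableSpace Ω]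

/-- The value of the per-task bound with inverse temperature `β` and constant term `C`. The sample
space `(Ω, μ)` plays the role of the priors under the hyper-prior, and `f i ω` that of the
generalized log-marginal likelihood `log Z_β(S_i, P)` of task `i`. -/
def perTaskBound (β C : ℝ) (f : ι → Ω → ℝ) (μ : Measure Ω) : ℝ :=
  -(1 / (Fintype.card ι * β)) * ∑ i, ∫ ω, f i ω ∂μ + C

/-- The value of the PACOH meta-learning bound with parameters `lam` (the paper's `λ`) and `β` and
constant term `C`, for log-marginal likelihoods `f` as in `perTaskBound`. The cumulant generating
function is `log Zᴵᴵ`. -/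
def pacohBound (lam β C : ℝ) (f : ι → Ω → ℝ) (μ : Measure Ω) : ℝ :=
  -(1 / lam + 1 / (Fintype.card ι * β))
    * cgf (fun ω => ∑ i, f i ω) μ (lam / (Fintype.card ι * β + lam)) + C

variable [Nonempty ι] {lam β : ℝ} {f : ι → Ω → ℝ} {μ : Measure Ω}

theorem perTaskBound_sub_pacohBound (hlam : 0 < lam) (hβ : 0 < β) (C : ℝ) :
    perTaskBound β C f μ - pacohBound lam β C f μ
      = (1 / lam + 1 / (Fintype.card ι * β))
        * (cgf (fun ω => ∑ i, f i ω) μ (lam / (Fintype.card ι * β + lam))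
          - lam / (Fintype.card ι * β + lam) * ∑ i, ∫ ω, f i ω ∂μ) := by
  have hnβ : 0 < Fintype.card ι * β := by positivity
  have hprefactor := one_div_add_one_div_mul_div_add hlam.ne' hnβ.ne' (add_pos hnβ hlam).ne'
  rw [perTaskBound, pacohBound]
  linear_combination (∑ i, ∫ ω, f i ω ∂μ) * hprefactor

theorem meta_learning_improvement_over_per_task_general [IsProbabilityMeasure μ]
    (hlam : 0 < lam) (hβ : 0 < β) (hf : ∀ i, Integrable (f i) μ)
    (hexp : Integrable (fun ω => exp (lam / (Fintype.card ι * β + lam) * ∑ i, f i ω)) μ)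
    (C : ℝ) :
    perTaskBound β C f μ - pacohBound lam β C f μ
      = (1 / lam + 1 / (Fintype.card ι * β))
        * cgf (fun ω => ∑ i, (f i ω - ∫ ω', f i ω' ∂μ)) μ (lam / (Fintype.card ι * β + lam))
    ∧ 0 ≤ perTaskBound β C f μ - pacohBound lam β C f μ := by
  have hjensen := mul_integral_le_cgf (integrable_finsetSum _ fun i _ => hf i) hexp
  rw [integral_finsetSum _ fun i _ => hf i] at hjensen
  rw [perTaskBound_sub_pacohBound hlam hβ]
  simp only [Finset.sum_sub_distrib]
  exact ⟨by rw [cgf_sub_const hexp], mul_nonneg (by positivity) (sub_nonneg.2 hjensen)⟩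

end Bounds

end

/-- **Improvement of the PACOH meta-learning bound over the per-task learning bound
(Proposition 7).** With `λ = √n`, `β = √m` and `Z(S,P) = Z_{√m}(S,P)`, the difference
`Δ = B_pt - B_meta` between the per-task bound value and the PACOH bound value equals
`(1/√n + 1/(n√m)) log E_{P∼P}[exp ((1/(√(nm)+1)) ∑_i (log Z(S_i,P) - E_{P'∼P}[log Z(S_i,P')]))]`
and is nonnegative. -/
theorem meta_learning_improvement_over_per_task
    {Z H : Type*} [MeasurableSpace Z] [MeasurableSpace H]
    (l : H → Z → ℝ) (hl : Measurable (Function.uncurry l))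
    (m n : ℕ) (hm : 0 < m) (hn : 0 < n)
    (S : Fin n → Fin m → Z)
    (Pr : Measure (Measure H)) [IsProbabilityMeasure Pr]
    -- `Z^{II}` is finite and positive:
    (hZIIint : Integrable (fun P : Measure H => Real.exp ((1 / (Real.sqrt ((n : ℝ) * m) + 1)) *
        ∑ i, Real.log (Zpart l (Real.sqrt m) (S i) P))) Pr)
    (hZIIpos : 0 < ∫ P, Real.exp ((1 / (Real.sqrt ((n : ℝ) * m) + 1)) *
        ∑ i, Real.log (Zpart l (Real.sqrt m) (S i) P)) ∂Pr)
    -- all the expectations `E_{P∼P}[log Z(S_i,P)]` are finite: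
    (hlogZ : ∀ i, Integrable (fun P => Real.log (Zpart l (Real.sqrt m) (S i) P)) Pr)
    -- the common constant term of the two bounds:
    (C : ℝ)
    -- the per-task bound value:
    (Bpt : ℝ)
    (hBpt : Bpt = -(1 / ((n : ℝ) * Real.sqrt m))
        * ∑ i, ∫ P, Real.log (Zpart l (Real.sqrt m) (S i) P) ∂Pr + C)
    -- the PACOH meta-learning bound value:
    (Bmeta : ℝ)
    (hBmeta : Bmeta = -(1 / Real.sqrt n + 1 / ((n : ℝ) * Real.sqrt m))
        * Real.log (∫ P, Real.exp ((1 / (Real.sqrt ((n : ℝ) * m) + 1)) *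
            ∑ i, Real.log (Zpart l (Real.sqrt m) (S i) P)) ∂Pr) + C) :
    Bpt - Bmeta
      = (1 / Real.sqrt n + 1 / ((n : ℝ) * Real.sqrt m))
          * Real.log (∫ P, Real.exp ((1 / (Real.sqrt ((n : ℝ) * m) + 1)) *
              ∑ i, (Real.log (Zpart l (Real.sqrt m) (S i) P)
                - ∫ P', Real.log (Zpart l (Real.sqrt m) (S i) P') ∂Pr)) ∂Pr)
    ∧ 0 ≤ Bpt - Bmeta := by
  have : Nonempty (Fin n) := ⟨⟨0, hn⟩⟩
  have hexponent := sqrt_div_mul_sqrt_add_sqrt (Nat.cast_pos.2 hn : (0 : ℝ) < n) m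
  subst hBpt hBmeta
  simpa only [perTaskBound, pacohBound, ProbabilityTheory.cgf, ProbabilityTheory.mgf,
    Fintype.card_fin, hexponent] using
    meta_learning_improvement_over_per_task_general (lam := √n) (β := √m)
      (by positivity) (by positivity) hlogZ
      (by simpa only [Fintype.card_fin, hexponent] using hZIIint) C
end

section
/- Environment-level generalization step of the meta-learning bound: Let T be an environment, Q : Z^m × M(H) → M(H) a base learner, P a hyper-prior on M(H), λ > 0, and fix tasks (D_1,S_1),…,(D_n,S_n). Then for every hyper-posterior Q ∈ M(M(H)) for which the appearing expectations exist and are finite: L(Q,T) ≤ E_{P∼Q}[(1/n)·∑_{i=1}^n L(Q(S_i,P),D_i)] + (1/λ)·D_KL(Q‖P) + (1/λ)·log E_{P∼P}[ e^{(λ/n)·∑_{i=1}^n ( E_{(D,S)∼T_h}[L(Q(S,P),D)] − L(Q(S_i,P),D_i) )} ]. -/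
open MeasureTheory Real
open scoped ENNReal Classical

/-!
The relative entropy of `μ` with respect to the exponential tilt of `ν` by `f` is nonnegative;
expanding it gives the Donsker–Varadhan inequality `E_μ[f] ≤ D_KL(μ‖ν) + log E_ν[exp f]`.
Applied to `λ` times the gap between the transfer error and the average task error, as functions
of the prior, and divided by `λ`, this is the generalization bound.
-/

section ChangeOfMeasure

variable {α : Type*} [MeasurableSpace α] {μ ν : Measure α} [IsProbabilityMeasure μ] [SigmaFinite ν]

theorem integral_le_integral_llr_add_log_integral_exp {f : α → ℝ} (hμν : μ ≪ ν)
    (h_llr : Integrable (llr μ ν) μ) (hfμ : Integrable f μ)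
    (hfν : Integrable (fun x ↦ exp (f x)) ν) :
    ∫ x, f x ∂μ ≤ ∫ x, llr μ ν x ∂μ + log (∫ x, exp (f x) ∂ν) := by
  have : NeZero ν := ⟨fun hν ↦ NeZero.ne μ (Measure.absolutelyContinuous_zero_iff.mp (hν ▸ hμν))⟩
  have := isProbabilityMeasure_tilted hfν
  have h_nonneg : 0 ≤ ∫ x, llr μ (ν.tilted f) x ∂μ := by
    simpa only [probReal_univ, add_sub_cancel_right] using
      InformationTheory.integral_llr_add_sub_measure_univ_nonneg
        (hμν.trans (absolutelyContinuous_tilted hfν))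
        (integrable_llr_tilted_right hμν hfμ h_llr hfν)
  rw [integral_llr_tilted_right hμν hfμ hfν h_llr] at h_nonneg
  linarith

theorem integral_le_integral_add_integral_llr_add_log_integral_exp_mul_sub {f g : α → ℝ} {c : ℝ}
    (hc : 0 < c) (hμν : μ ≪ ν) (h_llr : Integrable (llr μ ν) μ) (hf : Integrable f μ)
    (hg : Integrable g μ) (h_exp : Integrable (fun x ↦ exp (c * (f x - g x))) ν) :
    ∫ x, f x ∂μ ≤ ∫ x, g x ∂μ + (1 / c) * ∫ x, llr μ ν x ∂μ
      + (1 / c) * log (∫ x, exp (c * (f x - g x)) ∂ν) := by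
  have h_gap : c * (∫ x, f x ∂μ - ∫ x, g x ∂μ)
      ≤ ∫ x, llr μ ν x ∂μ + log (∫ x, exp (c * (f x - g x)) ∂ν) := by
    rw [← integral_sub hf hg, ← integral_const_mul]
    exact integral_le_integral_llr_add_log_integral_exp hμν h_llr
      ((hf.sub hg).const_mul c) h_exp
  rw [← le_div_iff₀' hc, sub_le_iff_le_add'] at h_gap
  rwa [add_assoc, ← mul_add, one_div_mul_eq_div]

theorem div_card_mul_sum_sub {ι K : Type*} [Fintype ι] [Nonempty ι] [Field K] [CharZero K]
    (c a : K) (b : ι → K) :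
    c / Fintype.card ι * ∑ i, (a - b i) = c * (a - 1 / Fintype.card ι * ∑ i, b i) := by
  have h_card : (Fintype.card ι : K) ≠ 0 := Nat.cast_ne_zero.mpr Fintype.card_ne_zero
  rw [Finset.sum_sub_distrib, Finset.sum_const, Finset.card_univ, nsmul_eq_mul]
  field_simp

/-- A point `x` stands for a prior `P`, `f x` for `E_{(D,S)∼T_h}[L(Q(S,P),D)]`, and `g i x` for
`L(Q(S_i,P),D_i)`. -/
theorem environment_level_generalization_step_general {ι : Type*} [Fintype ι] [Nonempty ι]
    {f : α → ℝ} {g : ι → α → ℝ} {c : ℝ} (hc : 0 < c) (hμν : μ ≪ ν)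
    (h_llr : Integrable (llr μ ν) μ) (hf : Integrable f μ)
    (hg : Integrable (fun x ↦ (1 / Fintype.card ι : ℝ) * ∑ i, g i x) μ)
    (h_exp : Integrable (fun x ↦ exp (c / Fintype.card ι * ∑ i, (f x - g i x))) ν) :
    ∫ x, f x ∂μ ≤ (∫ x, (1 / Fintype.card ι : ℝ) * ∑ i, g i x ∂μ)
      + (1 / c) * ∫ x, llr μ ν x ∂μ
      + (1 / c) * log (∫ x, exp (c / Fintype.card ι * ∑ i, (f x - g i x)) ∂ν) := by
  simp only [div_card_mul_sum_sub] at h_exp ⊢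
  exact integral_le_integral_add_integral_llr_add_log_integral_exp_mul_sub hc hμν h_llr hf hg h_exp

end ChangeOfMeasure

/-- **Environment-level generalization step of the meta-learning bound.** For an environment
`T`, base learner `QL`, hyper-prior `P`, `λ > 0` and fixed tasks `(D_1,S_1),…,(D_n,S_n)`,
every hyper-posterior `Q` for which the appearing expectations exist and are finite satisfies
`L(Q,T) ≤ E_{P∼Q}[(1/n) ∑_i L(Q(S_i,P),D_i)] + (1/λ) D_KL(Q‖P)
  + (1/λ) log E_{P∼P}[exp ((λ/n) ∑_i (E_{(D,S)∼T_h}[L(Q(S,P),D)] - L(Q(S_i,P),D_i)))]`. -/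
theorem environment_level_generalization_step
    {Z H : Type*} [MeasurableSpace Z] [MeasurableSpace H]
    (l : H → Z → ℝ) (hl : Measurable (Function.uncurry l))
    (m n : ℕ) (hm : 0 < m) (hn : 0 < n)
    (T : Measure (Measure Z)) [IsProbabilityMeasure T]
    (D : Fin n → Measure Z) (hD : ∀ i, IsProbabilityMeasure (D i))
    (S : Fin n → Fin m → Z)
    (QL : (Fin m → Z) → Measure H → Measure H)
    (hQL : Measurable (Function.uncurry QL))
    (hQLprob : ∀ S' P, IsProbabilityMeasure (QL S' P))
    (Pr : Measure (Measure H)) [IsProbabilityMeasure Pr]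
    (lam : ℝ) (hlam : 0 < lam)
    -- the CGF-type expectation on the right-hand side exists and is finite:
    (hmgf : Integrable (fun P : Measure H => Real.exp ((lam / n) *
        ∑ i, (priorTransferErr l m T QL P - gibbsExpErr l (QL (S i) P) (D i)))) Pr) :
    ∀ Q : Measure (Measure H), IsProbabilityMeasure Q →
      Q ≪ Pr → Integrable (llr Q Pr) Q →
      Integrable (fun P => priorTransferErr l m T QL P) Q →
      Integrable (fun P => (1 / n : ℝ) * ∑ i, gibbsExpErr l (QL (S i) P) (D i)) Q →
      transferErr l m T QL Q
        ≤ (∫ P, (1 / n : ℝ) * ∑ i, gibbsExpErr l (QL (S i) P) (D i) ∂Q)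
          + (1 / lam) * ∫ P, llr Q Pr P ∂Q
          + (1 / lam) * Real.log (∫ P, Real.exp ((lam / n) *
              ∑ i, (priorTransferErr l m T QL P - gibbsExpErr l (QL (S i) P) (D i))) ∂Pr) := by
  intro Q _ hQPr h_llr h_transfer h_task
  have : NeZero n := ⟨hn.ne'⟩
  have h_bound := environment_level_generalization_step_general (ι := Fin n)
    (g := fun i P ↦ gibbsExpErr l (QL (S i) P) (D i)) hlam hQPr h_llr h_transfer
  simp only [Fintype.card_fin] at h_bound
  exact h_bound h_task hmgf
end

section
/- Gaussian exponential-over-square-root bound: Let σ > 0 and a, b > 0 with 2·a·σ² < 1. Then for a real random variable x with the Gaussian distribution N(0, σ²): E[ e^{a·x²} / √(b + 2·a·x²) ] < 1 / √( b·(1 − 2·a·σ²) ). -/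
open MeasureTheory ProbabilityTheory Real
open scoped ENNReal NNReal

/-!
Dropping the nonnegative term `2 a x²` under the square root only increases the integrand, and
strictly so for almost every `x` because a nondegenerate Gaussian does not charge `0`. What is left
is `√b⁻¹` times `E[exp (a x²)]`, a Gaussian integral equal to `1 / √(1 - 2 a σ²)`.
-/

section DivSqrtAdd

variable {Ω : Type*} {mΩ : MeasurableSpace Ω} {μ : Measure Ω} {f g : Ω → ℝ} {b : ℝ}

lemma div_sqrt_add_ae_le (hb : 0 < b) (hf_nonneg : 0 ≤ᵐ[μ] f) (hg_nonneg : 0 ≤ᵐ[μ] g) :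
    (fun x ↦ f x / √(b + g x)) ≤ᵐ[μ] fun x ↦ f x / √b := by
  filter_upwards [hf_nonneg, hg_nonneg] with x hfx hgx
  simp only [Pi.zero_apply] at hfx hgx
  gcongr
  exact le_add_of_nonneg_right hgx

lemma integrable_div_sqrt_add (hb : 0 < b) (hf : Integrable f μ) (hg : AEMeasurable g μ)
    (hg_nonneg : 0 ≤ᵐ[μ] g) :
    Integrable (fun x ↦ f x / √(b + g x)) μ := by
  have h_aesm : AEStronglyMeasurable (fun x ↦ f x / √(b + g x)) μ :=
    (hf.aemeasurable.div (hg.const_add b).sqrt).aestronglyMeasurable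
  refine (hf.norm.div_const √b).mono' h_aesm ?_
  filter_upwards [div_sqrt_add_ae_le hb (.of_forall fun x ↦ norm_nonneg (f x)) hg_nonneg]
    with x hx
  rwa [norm_div, norm_of_nonneg (sqrt_nonneg _)]

lemma integral_div_sqrt_add_lt (hb : 0 < b) (hf : Integrable f μ) (hf_pos : ∀ᵐ x ∂μ, 0 < f x)
    (hg : AEMeasurable g μ) (hg_nonneg : 0 ≤ᵐ[μ] g) (hg_ne : ¬ g =ᵐ[μ] 0) :
    ∫ x, f x / √(b + g x) ∂μ < (∫ x, f x ∂μ) / √b := by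
  have h_le := div_sqrt_add_ae_le hb (hf_pos.mono fun _ ↦ le_of_lt) hg_nonneg
  have h_int := integrable_div_sqrt_add hb hf hg hg_nonneg
  have h_ne : ¬ (fun x ↦ f x / √(b + g x)) =ᵐ[μ] fun x ↦ f x / √b := by
    refine mt (fun h_eq ↦ ?_) hg_ne
    filter_upwards [h_eq, hf_pos, hg_nonneg] with x hx hfx hgx
    rw [div_eq_mul_inv, div_eq_mul_inv, mul_right_inj' hfx.ne', inv_inj,
      sqrt_inj (add_nonneg hb.le hgx) hb.le] at hx
    exact add_eq_left.1 hx
  rw [← integral_div]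
  exact (integral_mono_ae h_int (hf.div_const _) h_le).lt_of_ne
    (mt (integral_eq_iff_of_ae_le h_int (hf.div_const _) h_le).1 h_ne)

end DivSqrtAdd

section GaussianReal

variable {v : ℝ≥0}

lemma integrable_gaussianReal_iff_integrable_smul {E : Type*} [NormedAddCommGroup E]
    [NormedSpace ℝ E] {m : ℝ} {f : ℝ → E} (hv : v ≠ 0) :
    Integrable f (gaussianReal m v) ↔ Integrable fun x ↦ gaussianPDFReal m v x • f x := by
  rw [gaussianReal_of_var_ne_zero m hv, integrable_withDensity_iff_integrable_smul'
    (measurable_gaussianPDF m v) (.of_forall fun _ ↦ gaussianPDF_lt_top)]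
  simp only [toReal_gaussianPDF]

lemma gaussianPDFReal_zero_mul_exp_mul_sq (hv : v ≠ 0) (a x : ℝ) :
    gaussianPDFReal 0 v x * exp (a * x ^ 2) =
      (√(2 * π * v))⁻¹ * exp (-((1 - 2 * a * v) / (2 * v)) * x ^ 2) := by
  rw [gaussianPDFReal, mul_assoc, ← exp_add]
  congr 2
  field_simp
  ring

lemma integrable_exp_mul_sq_gaussianReal_iff {a : ℝ} :
    Integrable (fun x ↦ exp (a * x ^ 2)) (gaussianReal 0 v) ↔ 2 * a * v < 1 := by
  rcases eq_or_ne v 0 with rfl | hv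
  · simp [integrable_dirac]
  have hc : (√(2 * π * v))⁻¹ ≠ 0 := by positivity
  have hv_pos : (0 : ℝ) < 2 * v := by positivity
  simp_rw [integrable_gaussianReal_iff_integrable_smul hv, smul_eq_mul,
    gaussianPDFReal_zero_mul_exp_mul_sq hv]
  rw [integrable_const_mul_iff hc.isUnit, integrable_exp_neg_mul_sq_iff,
    div_pos_iff_of_pos_right hv_pos, sub_pos]

-- For `1 ≤ 2 * a * v` both sides take the junk value `0`.
lemma integral_exp_mul_sq_gaussianReal (a : ℝ) :
    ∫ x, exp (a * x ^ 2) ∂(gaussianReal 0 v) = (√(1 - 2 * a * v))⁻¹ := by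
  rcases eq_or_ne v 0 with rfl | hv
  · simp
  simp_rw [integral_gaussianReal_eq_integral_smul hv, smul_eq_mul,
    gaussianPDFReal_zero_mul_exp_mul_sq hv]
  rw [integral_const_mul, integral_gaussian, ← sqrt_inv, ← sqrt_inv, ← sqrt_mul (by positivity)]
  congr 1
  field_simp

end GaussianReal

/-- **Gaussian exponential-over-square-root bound (Lemma 9).** Let `σ > 0` and `a, b > 0`
with `2 a σ² < 1`. Then for `x ∼ N(0, σ²)`:
`E[exp (a x²) / √(b + 2 a x²)] < 1 / √(b (1 - 2 a σ²))`. -/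
theorem gaussian_exp_over_sqrt_bound
    (σ a b : ℝ) (hσ : 0 < σ) (ha : 0 < a) (hb : 0 < b)
    (h : 2 * a * σ ^ 2 < 1) :
    ∫ x, Real.exp (a * x ^ 2) / Real.sqrt (b + 2 * a * x ^ 2)
        ∂(gaussianReal 0 ((σ ^ 2).toNNReal))
      < 1 / Real.sqrt (b * (1 - 2 * a * σ ^ 2)) := by
  set v := (σ ^ 2).toNNReal
  have hv : (v : ℝ) = σ ^ 2 := coe_toNNReal _ (sq_nonneg σ)
  have hv_ne : v ≠ 0 := (toNNReal_pos.2 (by positivity)).ne'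
  have : NullSingletonClass (gaussianReal 0 v) := nullSingletonClass_gaussianReal hv_ne
  rw [← hv] at h ⊢
  have h_sq_ne : ¬ (fun x ↦ 2 * a * x ^ 2) =ᵐ[gaussianReal 0 v] 0 := fun h_eq ↦ by
    obtain ⟨x, hx, hx_ne⟩ := (h_eq.and (Measure.ae_ne _ 0)).exists
    exact (by positivity : 2 * a * x ^ 2 ≠ 0) hx
  calc ∫ x, exp (a * x ^ 2) / √(b + 2 * a * x ^ 2) ∂(gaussianReal 0 v)
      < (∫ x, exp (a * x ^ 2) ∂(gaussianReal 0 v)) / √b :=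
        integral_div_sqrt_add_lt hb (integrable_exp_mul_sq_gaussianReal_iff.2 h)
          (.of_forall fun _ ↦ exp_pos _) (by fun_prop) (.of_forall fun _ ↦ by positivity) h_sq_ne
    _ = 1 / √(b * (1 - 2 * a * v)) := by
        rw [integral_exp_mul_sq_gaussianReal, sqrt_mul hb.le, ← one_div, div_div, mul_comm]
end

section
/- Sub-gamma bound for the environment-level cumulant-generating function in Bayesian linear regression: Let d ≥ 1, μ_T ∈ ℝ^d, and σ, σ_x, σ_T, σ_P > 0. Set c = (σ_x²/σ²)·(σ_P² + σ_T²) and s² = (σ_x²/σ²)·c·‖μ_T‖² + d·c². If w* ∼ N(μ_T, σ_T²·I_d) and μ_P ∼ N(0, σ_P²·I_d) are independent, then for every λ > 0: log E[ exp( (λ/(2σ²))·( σ_x²·(‖μ_T‖² + d·σ_T² + d·σ_P²) − σ_x²·‖w* − μ_P‖² ) ) ] ≤ λ²·s² / ( 2·(1 + λ·c) ). -/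
open MeasureTheory ProbabilityTheory Real
open scoped ENNReal NNReal

/-!
The coordinates of `w* - μ_P` are independent Gaussians. If `X ∼ N(m, v)` and `2vt < 1`, completing
the square gives `log E[exp (t X²)] = t m² / (1 - 2vt) - log (1 - 2vt) / 2`, and `log y ≥ 1 - 1/y`
bounds this by `t E[X²] / (1 - 2vt)`. Centring `X²` at its mean `E[X²] = m² + v` leaves
`2 t² v E[X²] / (1 - 2vt)`. The claim is the sum of these bounds over the coordinates at
`t = -λ σ_x² / (2σ²)`, where `1 - 2vt = 1 + λc`.
-/

section SquareOfGaussian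

variable {m t : ℝ} {v : ℝ≥0}

lemma gaussianPDFReal_mul_exp_mul_sq (hv : v ≠ 0) (ht : 2 * v * t < 1) (x : ℝ) :
    gaussianPDFReal m v x * exp (t * x ^ 2) =
      (√(1 - 2 * v * t))⁻¹ * exp (t * m ^ 2 / (1 - 2 * v * t)) *
        gaussianPDFReal (m / (1 - 2 * v * t)) (v / (1 - 2 * v * t)).toNNReal x := by
  have hu : 0 < 1 - 2 * v * t := sub_pos.2 ht
  have hsqrt : √(2 * π * v) = √(1 - 2 * v * t) * √(2 * π * (v / (1 - 2 * v * t))) := by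
    rw [← sqrt_mul hu.le]
    congr 1
    field_simp
  simp only [gaussianPDFReal, coe_toNNReal _ (div_nonneg v.coe_nonneg hu.le)]
  rw [hsqrt, mul_inv, mul_assoc, ← exp_add, mul_mul_mul_comm, ← exp_add]
  congr 2
  have hv' : (v : ℝ) ≠ 0 := NNReal.coe_ne_zero.2 hv
  field_simp
  ring

lemma mgf_sq_gaussianReal (ht : 2 * v * t < 1) :
    mgf (fun x ↦ x ^ 2) (gaussianReal m v) t =
      (√(1 - 2 * v * t))⁻¹ * exp (t * m ^ 2 / (1 - 2 * v * t)) := by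
  rcases eq_or_ne v 0 with rfl | hv
  · simp [mgf]
  have hw : (v / (1 - 2 * v * t)).toNNReal ≠ 0 :=
    (toNNReal_pos.2 (div_pos (by positivity) (sub_pos.2 ht))).ne'
  simp_rw [mgf, integral_gaussianReal_eq_integral_smul hv, smul_eq_mul,
    gaussianPDFReal_mul_exp_mul_sq hv ht]
  rw [integral_const_mul, integral_gaussianPDFReal_eq_one _ hw, mul_one]

lemma mgf_sq_sub_const_gaussianReal (ht : 2 * v * t < 1) (b : ℝ) :
    mgf (fun x ↦ x ^ 2 - b) (gaussianReal m v) t =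
      (√(1 - 2 * v * t))⁻¹ * exp (t * m ^ 2 / (1 - 2 * v * t) - t * b) := by
  simp only [sub_eq_add_neg _ b, mgf_add_const, mgf_sq_gaussianReal ht]
  rw [mul_assoc, ← exp_add, mul_neg, ← sub_eq_add_neg]

lemma integrable_exp_mul_sq_sub_const_gaussianReal (ht : 2 * v * t < 1) (b : ℝ) :
    Integrable (fun x ↦ exp (t * (x ^ 2 - b))) (gaussianReal m v) := by
  rw [← mgf_pos_iff, mgf_sq_sub_const_gaussianReal ht]
  exact mul_pos (inv_pos.2 (sqrt_pos.2 (sub_pos.2 ht))) (exp_pos _)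

lemma cgf_sq_sub_const_gaussianReal (ht : 2 * v * t < 1) (b : ℝ) :
    cgf (fun x ↦ x ^ 2 - b) (gaussianReal m v) t =
      -(log (1 - 2 * v * t) / 2) + (t * m ^ 2 / (1 - 2 * v * t) - t * b) := by
  have hu : 0 < 1 - 2 * v * t := sub_pos.2 ht
  rw [cgf, mgf_sq_sub_const_gaussianReal ht, log_mul (by positivity) (by positivity), log_inv,
    log_sqrt hu.le, log_exp]

lemma cgf_centered_sq_gaussianReal_le (ht : 2 * v * t < 1) :
    cgf (fun x ↦ x ^ 2 - (m ^ 2 + v)) (gaussianReal m v) t ≤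
      2 * t ^ 2 * v * (m ^ 2 + v) / (1 - 2 * v * t) := by
  have hu : 0 < 1 - 2 * v * t := sub_pos.2 ht
  calc cgf (fun x ↦ x ^ 2 - (m ^ 2 + v)) (gaussianReal m v) t
      = -(log (1 - 2 * v * t) / 2) + (t * m ^ 2 / (1 - 2 * v * t) - t * (m ^ 2 + v)) :=
        cgf_sq_sub_const_gaussianReal ht _
    _ ≤ -((1 - (1 - 2 * v * t)⁻¹) / 2) + (t * m ^ 2 / (1 - 2 * v * t) - t * (m ^ 2 + v)) := by
        gcongr
        exact one_sub_inv_le_log_of_pos hu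
    _ = 2 * t ^ 2 * v * (m ^ 2 + v) / (1 - 2 * v * t) := by
        field_simp
        ring

end SquareOfGaussian

section GaussianVectors

variable {ι : Type*} [Fintype ι]

lemma cgf_sum_centered_sq_pi_gaussianReal_le {m : ι → ℝ} {v : ι → ℝ≥0} {t : ℝ}
    (ht : ∀ i, 2 * v i * t < 1) :
    cgf (fun x ↦ ∑ i, (x i ^ 2 - (m i ^ 2 + v i)))
        (Measure.pi fun i ↦ gaussianReal (m i) (v i)) t ≤
      ∑ i, 2 * t ^ 2 * v i * (m i ^ 2 + v i) / (1 - 2 * v i * t) := by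
  let Y (i : ι) (x : ℝ) : ℝ := x ^ 2 - (m i ^ 2 + v i)
  have hY (i : ι) : Measurable (Y i) := by fun_prop
  have hindep : iIndepFun (fun i x ↦ Y i (x i)) (Measure.pi fun i ↦ gaussianReal (m i) (v i)) :=
    iIndepFun_pi fun i ↦ (hY i).aemeasurable
  have hcoord (i : ι) := measurePreserving_eval (fun i ↦ gaussianReal (m i) (v i)) i
  have hint (i : ι) : Integrable (fun x ↦ exp (t * Y i (x i)))
      (Measure.pi fun i ↦ gaussianReal (m i) (v i)) :=
    (hcoord i).integrable_comp_of_integrable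
      (integrable_exp_mul_sq_sub_const_gaussianReal (ht i) _)
  have hcgf (i : ι) : cgf (fun x ↦ Y i (x i)) (Measure.pi fun i ↦ gaussianReal (m i) (v i)) t =
      cgf (Y i) (gaussianReal (m i) (v i)) t := by
    rw [cgf, cgf, ← (hcoord i).map_eq, mgf_map (hcoord i).measurable.aemeasurable (by fun_prop)]
    rfl
  calc cgf (fun x ↦ ∑ i, Y i (x i)) (Measure.pi fun i ↦ gaussianReal (m i) (v i)) t
      = ∑ i, cgf (Y i) (gaussianReal (m i) (v i)) t := by
        rw [← Finset.sum_fn, hindep.cgf_sum (by fun_prop) fun i _ ↦ hint i]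
        exact Finset.sum_congr rfl fun i _ ↦ hcgf i
    _ ≤ ∑ i, 2 * t ^ 2 * v i * (m i ^ 2 + v i) / (1 - 2 * v i * t) :=
        Finset.sum_le_sum fun i _ ↦ cgf_centered_sq_gaussianReal_le (ht i)

lemma pi_prod_pi_map {α β γ : Type*} [MeasurableSpace α] [MeasurableSpace β] [MeasurableSpace γ]
    {μ : ι → Measure α} {ν : ι → Measure β} [∀ i, SigmaFinite (μ i)] [∀ i, SigmaFinite (ν i)]
    {f : ι → α × β → γ} [∀ i, SigmaFinite (((μ i).prod (ν i)).map (f i))]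
    (hf : ∀ i, Measurable (f i)) :
    ((Measure.pi μ).prod (Measure.pi ν)).map (fun p i ↦ f i (p.1 i, p.2 i)) =
      Measure.pi fun i ↦ ((μ i).prod (ν i)).map (f i) := by
  rw [← (measurePreserving_arrowProdEquivProdArrow α β ι μ ν).map_eq,
    Measure.map_map (by fun_prop) (by fun_prop), ← Measure.pi_map_pi fun i ↦ (hf i).aemeasurable]
  rfl

lemma gaussianReal_prod_map_sub (m₁ m₂ : ℝ) (v₁ v₂ : ℝ≥0) :
    ((gaussianReal m₁ v₁).prod (gaussianReal m₂ v₂)).map (fun p ↦ p.1 - p.2) =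
      gaussianReal (m₁ - m₂) (v₁ + v₂) := by
  rw [sub_eq_add_neg, ← gaussianReal_conv_gaussianReal, ← gaussianReal_map_neg, Measure.conv,
    ← Measure.map_id (μ := gaussianReal m₁ v₁),
    Measure.map_prod_map _ _ (by fun_prop) (by fun_prop),
    Measure.map_map (by fun_prop) (by fun_prop), Measure.map_id]
  simp only [Function.comp_def, Prod.map_fst, Prod.map_snd, id_eq, ← sub_eq_add_neg]

lemma pi_gaussianReal_prod_map_sub (m₁ m₂ : ι → ℝ) (v₁ v₂ : ι → ℝ≥0) :
    ((Measure.pi fun i ↦ gaussianReal (m₁ i) (v₁ i)).prod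
        (Measure.pi fun i ↦ gaussianReal (m₂ i) (v₂ i))).map (fun p ↦ p.1 - p.2) =
      Measure.pi fun i ↦ gaussianReal (m₁ i - m₂ i) (v₁ i + v₂ i) := by
  simp_rw [← gaussianReal_prod_map_sub]
  exact pi_prod_pi_map (f := fun _ q ↦ q.1 - q.2) fun _ ↦ by fun_prop

lemma cgf_sum_centered_sq_sub_pi_gaussianReal_le {m₁ m₂ : ι → ℝ} {v₁ v₂ : ι → ℝ≥0} {t : ℝ}
    (ht : ∀ i, 2 * (v₁ i + v₂ i) * t < 1) :
    cgf (fun p ↦ ∑ i, ((p.1 i - p.2 i) ^ 2 - ((m₁ i - m₂ i) ^ 2 + (v₁ i + v₂ i))))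
        ((Measure.pi fun i ↦ gaussianReal (m₁ i) (v₁ i)).prod
          (Measure.pi fun i ↦ gaussianReal (m₂ i) (v₂ i))) t ≤
      ∑ i, 2 * t ^ 2 * (v₁ i + v₂ i) * ((m₁ i - m₂ i) ^ 2 + (v₁ i + v₂ i)) /
        (1 - 2 * (v₁ i + v₂ i) * t) := by
  have h := cgf_sum_centered_sq_pi_gaussianReal_le (m := m₁ - m₂) (v := v₁ + v₂) (t := t)
    (by simpa using ht)
  simp only [Pi.sub_apply, Pi.add_apply, NNReal.coe_add] at h
  rwa [cgf, ← pi_gaussianReal_prod_map_sub, mgf_map (by fun_prop)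
    (Measurable.aestronglyMeasurable (by fun_prop))] at h

end GaussianVectors

theorem env_level_cgf_subgamma_linear_regression_general
    {ι : Type*} [Fintype ι] (μT μP : ι → ℝ) (σ σx σT σP : ℝ) (hσ : σ ≠ 0)
    (c s2 : ℝ)
    (hc : c = (σx ^ 2 / σ ^ 2) * (σP ^ 2 + σT ^ 2))
    (hs2 : s2 = (σx ^ 2 / σ ^ 2) * c * (∑ i, (μT i - μP i) ^ 2) + Fintype.card ι * c ^ 2)
    (lam : ℝ) (hlam : 0 < 1 + lam * c) :
    log (∫ p : (ι → ℝ) × (ι → ℝ),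
        exp ((lam / (2 * σ ^ 2)) *
          (σx ^ 2 * ((∑ i, (μT i - μP i) ^ 2) + Fintype.card ι * σT ^ 2 + Fintype.card ι * σP ^ 2)
            - σx ^ 2 * ∑ i, (p.1 i - p.2 i) ^ 2))
        ∂((Measure.pi fun i ↦ gaussianReal (μT i) ((σT ^ 2).toNNReal)).prod
            (Measure.pi fun i ↦ gaussianReal (μP i) ((σP ^ 2).toNNReal))))
      ≤ lam ^ 2 * s2 / (2 * (1 + lam * c)) := by
  let t := -(lam * (σx ^ 2 / σ ^ 2) / 2)
  have htc : 1 - 2 * (σT ^ 2 + σP ^ 2) * t = 1 + lam * c := by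
    rw [hc]
    ring
  have hbound := cgf_sum_centered_sq_sub_pi_gaussianReal_le (m₁ := μT) (m₂ := μP)
    (v₁ := fun _ ↦ (σT ^ 2).toNNReal) (v₂ := fun _ ↦ (σP ^ 2).toNNReal) (t := t)
  simp only [coe_toNNReal _ (sq_nonneg _), ← Finset.sum_div, ← Finset.mul_sum, htc] at hbound
  convert hbound fun _ ↦ by linarith using 1
  · rw [cgf, mgf]
    congr! 4 with p
    simp only [Finset.sum_sub_distrib, Finset.sum_add_distrib, Finset.sum_const, Finset.card_univ,
      nsmul_eq_mul, t]
    field_simp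
    ring
  · simp only [Finset.sum_add_distrib, Finset.sum_const, Finset.card_univ, nsmul_eq_mul, hs2, hc, t]
    field_simp
    ring

/-- **Sub-gamma bound for the environment-level cumulant-generating function in Bayesian
linear regression.** Let `d ≥ 1`, `μ_T ∈ ℝ^d`, `σ, σ_x, σ_T, σ_P > 0`, and set
`c = (σ_x²/σ²)(σ_P² + σ_T²)` and `s² = (σ_x²/σ²) c ‖μ_T‖² + d c²`. If
`w* ∼ N(μ_T, σ_T² I_d)` and `μ_P ∼ N(0, σ_P² I_d)` are independent, then for every `λ > 0`:
`log E[exp ((λ/(2σ²)) (σ_x² (‖μ_T‖² + d σ_T² + d σ_P²) - σ_x² ‖w* - μ_P‖²))]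
  ≤ λ² s² / (2 (1 + λ c))`. -/
theorem env_level_cgf_subgamma_linear_regression
    (d : ℕ) (hd : 1 ≤ d) (μT : Fin d → ℝ)
    (σ σx σT σP : ℝ) (hσ : 0 < σ) (hσx : 0 < σx) (hσT : 0 < σT) (hσP : 0 < σP)
    (c s2 : ℝ)
    (hc : c = (σx ^ 2 / σ ^ 2) * (σP ^ 2 + σT ^ 2))
    (hs2 : s2 = (σx ^ 2 / σ ^ 2) * c * (∑ i, (μT i) ^ 2) + d * c ^ 2)
    (lam : ℝ) (hlam : 0 < lam) :
    Real.log (∫ p : (Fin d → ℝ) × (Fin d → ℝ),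
        Real.exp ((lam / (2 * σ ^ 2)) *
          (σx ^ 2 * ((∑ i, (μT i) ^ 2) + d * σT ^ 2 + d * σP ^ 2)
            - σx ^ 2 * ∑ i, (p.1 i - p.2 i) ^ 2))
        ∂((Measure.pi fun i : Fin d => gaussianReal (μT i) ((σT ^ 2).toNNReal)).prod
            (Measure.pi fun _ : Fin d => gaussianReal 0 ((σP ^ 2).toNNReal))))
      ≤ lam ^ 2 * s2 / (2 * (1 + lam * c)) := by
  simpa using env_level_cgf_subgamma_linear_regression_general μT 0 σ σx σT σP hσ.ne' c s2 hc
    (by simpa using hs2) lam (by rw [hc]; positivity)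
end
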